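/- Let F ∈ K[y, p] be irreducible over the algebraic closure of K, with K of characteristic zero, and suppose y(x) is a non-constant solution of F(y, y') = 0 that is algebraic over K̄(x) with minimal polynomial G ∈ K̄[x, y]. Then for every c ∈ K̄, every Puiseux series root of G(x + c, y) (as a polynomial in y) is a solution of F(y, y') = 0. -/

import Mathlib

noncomputable section
open HahnSeries

variable {L : Type*} [Field L]

/-- formal derivative of a Laurent series -/
def lderiv (f : LaurentSeries L) : LaurentSeries L :=
  { coeff := fun n => (n + 1 : ℤ) • f.coeff (n + 1)
    isPWO_support' := by
      apply Set.IsPWO.mono (Set.IsPWO.image_of_monotone f.isPWO_support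
        (f := fun n => n - 1) (fun a b h => by simpa using h))
      intro n hn
      refine ⟨n + 1, ?_, by simp⟩
      simp only [Function.mem_support] at hn ⊢
      exact fun h => hn (by rw [h]; simp) }

/-- A Puiseux series `y(x) = Y(x^{1/n})` is represented by a Laurent series `Y`
in the variable `t = x^{1/n}`.  Its derivative `dy/dx`, re-expanded in `t`, is
`Y'(t)/(n t^{n-1})`. -/
def bOf (n : ℕ) (Y : LaurentSeries L) : LaurentSeries L :=
  HahnSeries.single (1 - (n : ℤ)) ((n : L)⁻¹) * lderiv Y


/-!
Let `E` be the fraction field of the base ring. A root `z` of the minimal equation `g` of `y` is a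
root of the minimal polynomial of `y` over `E`, so some `E`-embedding of `E(y)` sends `y` to `z`.
Differentiating `g(y) = 0` gives `y' = -g^δ(y) / g'(y)`, where `δ` differentiates the
coefficients, and the same formula expresses `z'` through `z`. Hence the embedding sends `y'` to
`z'` and carries the relation `F(y, y') = 0` to `F(z, z') = 0`. Replacing `x` by `x + c` is
harmless because `x + c` still has derivative `1`.
-/

section Conjugates

open Polynomial IntermediateField
open scoped Differential

universe u

variable {R N : Type*} {M : Type u} [CommRing R] [Field M] [Field N] [Algebra R M] [Algebra R N]

/-- `g` is a minimal equation of `y` over `R`: a nonzero polynomial of least degree vanishing at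
`y`. Over a domain it replaces the minimal polynomial over the fraction field, to which it need
only be proportional; in particular it is neither monic nor primitive in general. -/
structure IsMinimalAnnihilator (g : R[X]) (y : M) : Prop where
  ne_zero : g ≠ 0
  aeval_eq_zero : aeval y g = 0
  natDegree_le : ∀ h : R[X], h ≠ 0 → aeval y h = 0 → g.natDegree ≤ h.natDegree

namespace IsMinimalAnnihilator

variable {g : R[X]} {y : M}

lemma natDegree_ne_zero [FaithfulSMul R M] (hg : IsMinimalAnnihilator g y) :
    g.natDegree ≠ 0 := by
  intro h
  have hroot := hg.aeval_eq_zero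
  rw [eq_C_of_natDegree_eq_zero h, aeval_C, FaithfulSMul.algebraMap_eq_zero_iff] at hroot
  exact hg.ne_zero (by rw [eq_C_of_natDegree_eq_zero h, hroot, C_0])

lemma aeval_derivative_ne_zero [FaithfulSMul R M] [CharZero R] (hg : IsMinimalAnnihilator g y) :
    aeval y (derivative g) ≠ 0 := by
  have := IsDomain.of_faithfulSMul R M
  intro h
  have hdeg := natDegree_derivative_lt hg.natDegree_ne_zero
  exact hdeg.not_ge <| hg.natDegree_le _ (fun h0 ↦ hg.natDegree_ne_zero (derivative_eq_zero.1 h0)) h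

variable (E : Type*) [Field E] [Algebra R E] [IsFractionRing R E]

include E in
lemma map_ne_zero (hg : IsMinimalAnnihilator g y) : g.map (algebraMap R E) ≠ 0 :=
  (Polynomial.map_ne_zero_iff (IsFractionRing.injective R E)).2 hg.ne_zero

variable [Algebra E M] [IsScalarTower R E M] [Algebra E N] [IsScalarTower R E N]

lemma isIntegral (hg : IsMinimalAnnihilator g y) : IsIntegral E y :=
  isAlgebraic_iff_isIntegral.1
    ⟨g.map (algebraMap R E), hg.map_ne_zero E, by rw [aeval_map_algebraMap, hg.aeval_eq_zero]⟩

lemma natDegree_le_minpoly (hg : IsMinimalAnnihilator g y) :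
    g.natDegree ≤ (minpoly E y).natDegree := by
  have := (IsFractionRing.injective R E).isDomain
  have hp := minpoly.ne_zero (hg.isIntegral E)
  calc g.natDegree
      ≤ (IsLocalization.integerNormalization (nonZeroDivisors R) (minpoly E y)).natDegree :=
        hg.natDegree_le _ (IsFractionRing.integerNormalization_eq_zero_iff.not.2 hp)
          (IsLocalization.integerNormalization_aeval_eq_zero _ _ (minpoly.aeval E y))
    _ ≤ (minpoly E y).natDegree :=
        natDegree_le_natDegree <| degree_mono <|
          IsLocalization.integerNormalization_support _ _

lemma associated_minpoly (hg : IsMinimalAnnihilator g y) :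
    Associated (minpoly E y) (g.map (algebraMap R E)) := by
  refine associated_of_dvd_of_natDegree_le ?_ (hg.map_ne_zero E) ?_
  · exact minpoly.dvd E y (by rw [aeval_map_algebraMap, hg.aeval_eq_zero])
  · exact natDegree_map_le.trans (hg.natDegree_le_minpoly E)

theorem exists_algHom_gen_eq (hg : IsMinimalAnnihilator g y) {z : N} (hz : aeval z g = 0) :
    ∃ φ : E⟮y⟯ →ₐ[E] N, φ (AdjoinSimple.gen E y) = z := by
  have hroot : aeval z (minpoly E y) = 0 := by
    rw [← aeval_map_algebraMap E] at hz
    exact aeval_eq_zero_of_dvd_aeval_eq_zero (hg.associated_minpoly E).symm.dvd hz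
  have hmem : z ∈ (minpoly E y).aroots N :=
    mem_aroots.2 ⟨minpoly.ne_zero (hg.isIntegral E), hroot⟩
  exact ⟨(algHomAdjoinIntegralEquiv E (hg.isIntegral E)).symm ⟨z, hmem⟩,
    algHomAdjoinIntegralEquiv_symm_apply_gen E (hg.isIntegral E) ⟨z, hmem⟩⟩

theorem exists_common_subfield [FaithfulSMul R M] [FaithfulSMul R N]
    (hg : IsMinimalAnnihilator g y) {z : N} (hz : aeval z g = 0) :
    ∃ (A : Type u) (_ : Field A) (_ : Algebra R A) (ι : A →ₐ[R] M) (ψ : A →ₐ[R] N) (a : A),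
      ι a = y ∧ ψ a = z := by
  have := IsDomain.of_faithfulSMul R M
  let E := FractionRing R
  let : Algebra E M := FractionRing.liftAlgebra R M
  let : Algebra E N := FractionRing.liftAlgebra R N
  obtain ⟨φ, hφ⟩ := hg.exists_algHom_gen_eq E hz
  exact ⟨E⟮y⟯, inferInstance, inferInstance, E⟮y⟯.val.restrictScalars R, φ.restrictScalars R,
    AdjoinSimple.gen E y, AdjoinSimple.coe_gen E y, hφ⟩

end IsMinimalAnnihilator

lemma aeval_algHom_pair {A B : Type*} [CommRing A] [CommRing B] [Algebra R A] [Algebra R B]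
    (f : A →ₐ[R] B) (a b : A) (F : MvPolynomial (Fin 2) R) :
    MvPolynomial.aeval ![f a, f b] F = f (MvPolynomial.aeval ![a, b] F) := by
  rw [MvPolynomial.comp_aeval_apply]
  congr 2 with i
  fin_cases i <;> rfl

variable [Differential R] [Differential M] [DifferentialAlgebra R M]
  [Differential N] [DifferentialAlgebra R N]

lemma deriv_algHom_eq {A : Type*} [Field A] [Algebra R A] (f : A →ₐ[R] M) {a : A} {g : R[X]}
    (ha : aeval a g = 0) (ha' : aeval a (derivative g) ≠ 0) :
    (f a)′ = f (-aeval a (Differential.mapCoeffs g) / aeval a (derivative g)) := by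
  have hg := Differential.deriv_aeval_eq (f a) g
  simp only [aeval_algHom_apply, ha, map_zero] at hg
  rw [map_div₀, map_neg, eq_div_iff ((map_ne_zero f).2 ha')]
  linear_combination -hg

theorem IsMinimalAnnihilator.aeval_pair_deriv_eq_zero [FaithfulSMul R M] [FaithfulSMul R N]
    [CharZero R] {g : R[X]} {y : M} (hg : IsMinimalAnnihilator g y) {z : N} (hz : aeval z g = 0)
    {F : MvPolynomial (Fin 2) R} (hF : MvPolynomial.aeval ![y, y′] F = 0) :
    MvPolynomial.aeval ![z, z′] F = 0 := by
  obtain ⟨A, _, _, ι, ψ, a, rfl, rfl⟩ := hg.exists_common_subfield hz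
  have ha : aeval a g = 0 := (map_eq_zero ι).1 <| by
    rw [← aeval_algHom_apply, hg.aeval_eq_zero]
  have ha' : aeval a (derivative g) ≠ 0 := fun h ↦ hg.aeval_derivative_ne_zero <| by
    rw [aeval_algHom_apply, h, map_zero]
  rw [deriv_algHom_eq ι ha ha', aeval_algHom_pair, map_eq_zero] at hF
  rw [deriv_algHom_eq ψ ha ha', aeval_algHom_pair, hF, map_zero]

end Conjugates

section Bivariate

open Polynomial

variable {R : Type*} [CommRing R]

lemma finSuccEquiv_rename_swap_equivMvPolynomial (p : R[X][X]) :
    MvPolynomial.finSuccEquiv R 1 (MvPolynomial.rename (Equiv.swap 0 1)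
      (Bivariate.equivMvPolynomial R p)) = p.map (aeval (MvPolynomial.X 0)).toRingHom := by
  have h : ((MvPolynomial.finSuccEquiv R 1).toAlgHom.comp
      (MvPolynomial.rename (Equiv.swap 0 1))).comp (Bivariate.equivMvPolynomial R).toAlgHom =
        mapAlgHom (aeval (MvPolynomial.X 0)) := by
    ext : 2
    · simpa using MvPolynomial.finSuccEquiv_X_succ (R := R) (j := (0 : Fin 1))
    · simp [MvPolynomial.finSuccEquiv_X_zero]
  exact DFunLike.congr_fun h p

lemma degreeOf_one_equivMvPolynomial (p : R[X][X]) :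
    (Bivariate.equivMvPolynomial R p).degreeOf 1 = p.natDegree := by
  have hinj : Function.Injective (aeval (R := R) (MvPolynomial.X (R := R) (0 : Fin 1))) :=
    transcendental_iff_injective.1 (MvPolynomial.transcendental_X R 0)
  calc (Bivariate.equivMvPolynomial R p).degreeOf 1
      = (MvPolynomial.rename (Equiv.swap 0 1) (Bivariate.equivMvPolynomial R p)).degreeOf 0 := by
        rw [← MvPolynomial.degreeOf_rename_of_injective (Equiv.swap (0 : Fin 2) 1).injective,
          Equiv.swap_apply_right]
    _ = (p.map (aeval (MvPolynomial.X (0 : Fin 1))).toRingHom).natDegree := by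
        rw [← finSuccEquiv_rename_swap_equivMvPolynomial, MvPolynomial.natDegree_finSuccEquiv]
    _ = p.natDegree := natDegree_map_eq_of_injective hinj p

lemma aeval_pair_equivMvPolynomial {A : Type*} [CommRing A] [Algebra R A] [Algebra R[X] A]
    [IsScalarTower R R[X] A] (y : A) (p : R[X][X]) :
    MvPolynomial.aeval ![algebraMap R[X] A X, y] (Bivariate.equivMvPolynomial R p) =
      aeval y p := by
  have h : (MvPolynomial.aeval ![algebraMap R[X] A X, y]).comp
      (Bivariate.equivMvPolynomial R).toAlgHom = (aeval (R := R[X]) y).restrictScalars R := by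
    ext <;> simp
  exact DFunLike.congr_fun h p

lemma isMinimalAnnihilator_equivMvPolynomial_symm {A : Type*} [Field A] [Algebra R A]
    [Algebra R[X] A] [IsScalarTower R R[X] A] {G : MvPolynomial (Fin 2) R} {y : A} (hG : G ≠ 0)
    (hroot : MvPolynomial.aeval ![algebraMap R[X] A X, y] G = 0)
    (hmin : ∀ H : MvPolynomial (Fin 2) R, H ≠ 0 →
      MvPolynomial.aeval ![algebraMap R[X] A X, y] H = 0 → G.degreeOf 1 ≤ H.degreeOf 1) :
    IsMinimalAnnihilator ((Bivariate.equivMvPolynomial R).symm G) y := by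
  obtain ⟨g, rfl⟩ := (Bivariate.equivMvPolynomial R).surjective G
  rw [AlgEquiv.symm_apply_apply]
  refine ⟨fun h ↦ hG (by rw [h, map_zero]), by rwa [← aeval_pair_equivMvPolynomial], ?_⟩
  intro h hh hy
  rw [← degreeOf_one_equivMvPolynomial, ← degreeOf_one_equivMvPolynomial]
  exact hmin _ ((map_ne_zero_iff _ (Bivariate.equivMvPolynomial R).injective).2 hh)
    (by rwa [aeval_pair_equivMvPolynomial])

end Bivariate

section TranscendentalVariable

open Polynomial
open scoped Differential

theorem transcendental_of_deriv_ne_zero {k A : Type*} [Field k] [CharZero k] [Differential k]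
    [Field A] [Differential A] [Algebra k A] [DifferentialAlgebra k A]
    (hk : ∀ c : k, c′ = 0) {u : A} (hu : u′ ≠ 0) : Transcendental k u := by
  intro hal
  have hsep : (minpoly k u).Separable := (minpoly.irreducible hal.isIntegral).separable
  have hcoeff : Differential.mapCoeffs (minpoly k u) = 0 := by ext; simp [hk]
  have h := Differential.deriv_aeval_eq u (minpoly k u)
  rw [minpoly.aeval, map_zero, hcoeff, map_zero, zero_add, zero_eq_mul] at h
  exact h.elim (hsep.aeval_derivative_ne_zero (minpoly.aeval k u)) hu

variable {k A B : Type*} [CommRing k] [CharZero k] [Differential k]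
  [Field A] [dA : Differential A] [Algebra k A] [DifferentialAlgebra k A]
  [Field B] [dB : Differential B] [Algebra k B] [DifferentialAlgebra k B]

theorem aeval_pair_deriv_eq_zero_of_minimal_degreeOf {w : k[X]} {u y : A} {v z : B}
    (htu : Transcendental k u) (hu : u′ = aeval u w)
    (htv : Transcendental k v) (hv : v′ = aeval v w)
    {G : MvPolynomial (Fin 2) k} (hG : G ≠ 0) (hy : MvPolynomial.aeval ![u, y] G = 0)
    (hmin : ∀ H : MvPolynomial (Fin 2) k, H ≠ 0 → MvPolynomial.aeval ![u, y] H = 0 →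
      G.degreeOf 1 ≤ H.degreeOf 1)
    (hz : MvPolynomial.aeval ![v, z] G = 0) {F : MvPolynomial (Fin 2) k}
    (hF : MvPolynomial.aeval ![y, y′] F = 0) : MvPolynomial.aeval ![z, z′] F = 0 := by
  let : Differential k[X] := ⟨Differential.implicitDeriv w⟩
  let : Algebra k[X] A := (aeval u).toAlgebra
  let : Algebra k[X] B := (aeval v).toAlgebra
  have : IsScalarTower k k[X] A := .of_algebraMap_eq' (aeval u).comp_algebraMap.symm
  have : IsScalarTower k k[X] B := .of_algebraMap_eq' (aeval v).comp_algebraMap.symm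
  have : DifferentialAlgebra k[X] A := ⟨Differential.deriv_aeval_eq_implicitDeriv u w hu⟩
  have : DifferentialAlgebra k[X] B := ⟨Differential.deriv_aeval_eq_implicitDeriv v w hv⟩
  have : FaithfulSMul k[X] A :=
    (faithfulSMul_iff_algebraMap_injective _ _).2 (transcendental_iff_injective.1 htu)
  have : FaithfulSMul k[X] B :=
    (faithfulSMul_iff_algebraMap_injective _ _).2 (transcendental_iff_injective.1 htv)
  have hXu : algebraMap k[X] A X = u := aeval_X u
  have hXv : algebraMap k[X] B X = v := aeval_X v
  rw [← hXu] at hy hmin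
  rw [← hXv, ← (Bivariate.equivMvPolynomial k).apply_symm_apply G,
    aeval_pair_equivMvPolynomial] at hz
  rw [← MvPolynomial.aeval_map_algebraMap k[X]] at hF ⊢
  exact (isMinimalAnnihilator_equivMvPolynomial_symm hG hy hmin).aeval_pair_deriv_eq_zero hz hF

end TranscendentalVariable

section Laurent

lemma algebraMap_laurentSeries {S T : Type*} [CommSemiring S] [CommSemiring T] [Algebra S T]
    (a : S) : algebraMap S (LaurentSeries T) a = C (algebraMap S T a) := by
  rw [algebraMap_apply', PowerSeries.algebraMap_apply, ofPowerSeries_C]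

lemma aeval_map_algebraMap_laurentSeries {σ K : Type*} [CommRing K] [Algebra K L]
    (f : σ → LaurentSeries L) (F : MvPolynomial σ K) :
    MvPolynomial.aeval f (MvPolynomial.map (algebraMap K L) F) = MvPolynomial.aeval f F := by
  have h : algebraMap K (LaurentSeries L) = (algebraMap L (LaurentSeries L)).comp
      (algebraMap K L) := RingHom.ext fun a ↦ by
    rw [RingHom.comp_apply, algebraMap_laurentSeries, algebraMap_laurentSeries,
      Algebra.algebraMap_self_apply]
  rw [MvPolynomial.aeval_def, MvPolynomial.aeval_def, MvPolynomial.eval₂_map, h]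

variable {S : Type*} [CommRing S]

/-- The Euler operator `t d/dt`. Unlike `d/dt` it does not shift exponents, which makes its
Leibniz rule a termwise identity. -/
def eulerOp (f : LaurentSeries S) : LaurentSeries S where
  coeff i := (i : S) * f.coeff i
  isPWO_support' := f.isPWO_support.mono fun _ ↦ right_ne_zero_of_mul

@[simp]
lemma coeff_eulerOp (f : LaurentSeries S) (i : ℤ) : (eulerOp f).coeff i = i * f.coeff i := rfl

lemma support_eulerOp_subset (f : LaurentSeries S) : (eulerOp f).support ⊆ f.support :=
  fun _ ↦ right_ne_zero_of_mul

lemma eulerOp_add (f g : LaurentSeries S) : eulerOp (f + g) = eulerOp f + eulerOp g := by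
  ext
  simp [mul_add]

lemma eulerOp_mul (f g : LaurentSeries S) :
    eulerOp (f * g) = f * eulerOp g + g * eulerOp f := by
  ext n
  rw [mul_comm g, coeff_add, coeff_mul_left' f.isPWO_support (support_eulerOp_subset f),
    coeff_mul_right' g.isPWO_support (support_eulerOp_subset g), coeff_eulerOp, coeff_mul,
    Finset.mul_sum, ← Finset.sum_add_distrib]
  refine Finset.sum_congr rfl fun ij hij ↦ ?_
  obtain ⟨-, -, rfl⟩ := Finset.mem_antidiagonal.1 hij
  simp only [coeff_eulerOp, Int.cast_add]
  ring

lemma eulerOp_single (i : ℤ) (a : S) : eulerOp (single i a) = single i (i * a) := by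
  ext j
  obtain rfl | hj := eq_or_ne j i <;> simp [*]

lemma lderiv_eq (f : LaurentSeries L) : lderiv f = single (-1) 1 * eulerOp f := by
  ext i
  rw [← add_neg_cancel_right i 1, coeff_single_mul_add]
  simp [lderiv]

lemma bOf_eq (n : ℕ) (f : LaurentSeries L) : bOf n f = single (-n : ℤ) (n : L)⁻¹ * eulerOp f := by
  rw [bOf, lderiv_eq, ← mul_assoc, single_mul_single, mul_one]
  congr 2
  ring_nf

lemma bOf_add (n : ℕ) (f g : LaurentSeries L) : bOf n (f + g) = bOf n f + bOf n g := by
  rw [bOf_eq, bOf_eq, bOf_eq, eulerOp_add, mul_add]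

lemma bOf_mul (n : ℕ) (f g : LaurentSeries L) :
    bOf n (f * g) = f * bOf n g + g * bOf n f := by
  rw [bOf_eq, bOf_eq, bOf_eq, eulerOp_mul]
  ring

lemma bOf_C (n : ℕ) (c : L) : bOf n (C c) = 0 := by
  rw [bOf_eq, C_apply, eulerOp_single, Int.cast_zero, zero_mul, single_eq_zero, mul_zero]

lemma bOf_single_self {n : ℕ} (hn : (n : L) ≠ 0) : bOf n (single (n : ℤ) (1 : L)) = 1 := by
  rw [bOf_eq, eulerOp_single, single_mul_single, neg_add_cancel, Int.cast_natCast, mul_one,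
    inv_mul_cancel₀ hn, single_zero_one]

lemma bOf_single_add_C {n : ℕ} (hn : (n : L) ≠ 0) (c : L) :
    bOf n (single (n : ℤ) 1 + C c) = 1 := by
  rw [bOf_add, bOf_C, add_zero, bOf_single_self hn]

/-- The differential ring structure given by an additive map satisfying the Leibniz rule. -/
abbrev differentialOfLeibniz {A : Type*} [CommRing A] (D : A →+ A)
    (h : ∀ a b, D (a * b) = a * D b + b * D a) : Differential A where
  deriv := .mk' D.toIntLinearMap h

/-- Laurent series in `t = x^{1/n}`, differentiated with respect to `x`. A definition rather than
an instance, since two values of `n` occur at once. -/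
abbrev puiseuxDifferential (n : ℕ) : Differential (LaurentSeries L) :=
  differentialOfLeibniz (AddMonoidHom.mk' (bOf n) (bOf_add n)) (bOf_mul n)

/-- The zero derivation, used to make `R` a ring of constants. -/
abbrev trivialDifferential (R : Type*) [CommRing R] : Differential R where
  deriv := 0

lemma differentialAlgebra_puiseuxDifferential (n : ℕ) :
    letI := trivialDifferential L
    letI := puiseuxDifferential (L := L) n
    DifferentialAlgebra L (LaurentSeries L) :=
  letI := trivialDifferential L
  letI := puiseuxDifferential (L := L) n
  ⟨fun c ↦ by
    rw [algebraMap_laurentSeries, algebraMap_laurentSeries]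
    exact (bOf_C n c).trans (map_zero C).symm⟩

lemma transcendental_single_add_C [CharZero L] {n : ℕ} (hn : (n : L) ≠ 0) (c : L) :
    Transcendental L (single (n : ℤ) 1 + C c : LaurentSeries L) := by
  let := trivialDifferential L
  let := puiseuxDifferential (L := L) n
  have := differentialAlgebra_puiseuxDifferential (L := L) n
  exact transcendental_of_deriv_ne_zero (fun _ ↦ rfl)
    ((bOf_single_add_C hn c).trans_ne one_ne_zero)

theorem aeval_pair_bOf_eq_zero_of_minimal_degreeOf [CharZero L]
    {n m : ℕ} (hn : (n : L) ≠ 0) (hm : (m : L) ≠ 0) (b c : L) {Y Z : LaurentSeries L}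
    {G : MvPolynomial (Fin 2) L} (hG : G ≠ 0)
    (hY : MvPolynomial.aeval ![(single (n : ℤ) 1 : LaurentSeries L) + C b, Y] G = 0)
    (hmin : ∀ H : MvPolynomial (Fin 2) L, H ≠ 0 →
      MvPolynomial.aeval ![(single (n : ℤ) 1 : LaurentSeries L) + C b, Y] H = 0 →
      G.degreeOf 1 ≤ H.degreeOf 1)
    (hZ : MvPolynomial.aeval ![(single (m : ℤ) 1 : LaurentSeries L) + C c, Z] G = 0)
    {F : MvPolynomial (Fin 2) L} (hF : MvPolynomial.aeval ![Y, bOf n Y] F = 0) :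
    MvPolynomial.aeval ![Z, bOf m Z] F = 0 := by
  let := trivialDifferential L
  have := differentialAlgebra_puiseuxDifferential (L := L) n
  have := differentialAlgebra_puiseuxDifferential (L := L) m
  exact aeval_pair_deriv_eq_zero_of_minimal_degreeOf (dA := puiseuxDifferential n)
    (dB := puiseuxDifferential m) (w := 1) (transcendental_single_add_C hn b)
    ((bOf_single_add_C hn b).trans (map_one _).symm) (transcendental_single_add_C hm c)
    ((bOf_single_add_C hm c).trans (map_one _).symm) hG hY hmin hZ hF

end Laurent

theorem roots_of_shifted_minimal_polynomial_are_solutions_general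
    {K L : Type*} [CommRing K] [Field L] [CharZero L] [Algebra K L]
    (F : MvPolynomial (Fin 2) K) (n : ℕ) (hn : 0 < n)
    (Y : LaurentSeries L) (hsol : MvPolynomial.aeval ![Y, bOf n Y] F = 0)
    (G : MvPolynomial (Fin 2) L) (hG0 : G ≠ 0)
    (hGroot : MvPolynomial.aeval ![(single (n : ℤ) 1 : LaurentSeries L), Y] G = 0)
    (hGmin : ∀ H : MvPolynomial (Fin 2) L, H ≠ 0 →
      MvPolynomial.aeval ![(single (n : ℤ) 1 : LaurentSeries L), Y] H = 0 →
      MvPolynomial.degreeOf 1 G ≤ MvPolynomial.degreeOf 1 H) :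
    ∀ c : L, ∀ m : ℕ, 0 < m → ∀ Z : LaurentSeries L,
      MvPolynomial.aeval ![(single (m : ℤ) 1 : LaurentSeries L) + C c, Z] G = 0 →
      MvPolynomial.aeval ![Z, bOf m Z] F = 0 := by
  intro c m hm Z hZ
  have hx : (single (n : ℤ) 1 : LaurentSeries L) + C 0 = single (n : ℤ) 1 := by
    rw [map_zero, add_zero]
  rw [← hx] at hGroot hGmin
  rw [← aeval_map_algebraMap_laurentSeries (L := L)] at hsol ⊢
  exact aeval_pair_bOf_eq_zero_of_minimal_degreeOf (Nat.cast_ne_zero.2 hn.ne')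
    (Nat.cast_ne_zero.2 hm.ne') 0 c hG0 hGroot hGmin hZ hsol

/-- **All roots of the shifted minimal polynomial are solutions.**
Let `K` have characteristic zero with algebraic closure `K̄`, and let
`F ∈ K[y,p]` (variables `0 = y`, `1 = p`) be irreducible over `K̄`.  Suppose
`y(x)` is a non-constant solution of `F(y, y') = 0`, represented by the Laurent
series `Y` in `t = x^{1/n}` (so `y' ↦ bOf n Y`), which is algebraic over
`K̄(x)` with minimal polynomial `G ∈ K̄[x,y]` (variables `0 = x`, `1 = y`;
minimality of the degree in `y` among nonzero annihilating polynomials).  Then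
for every `c ∈ K̄`, every Puiseux series root `z(x)` of `G(x + c, y)`
(represented by a Laurent series `Z` in `t = x^{1/m}`) is a solution of
`F(y, y') = 0`. -/
theorem roots_of_shifted_minimal_polynomial_are_solutions
    (K : Type*) [Field K] [CharZero K]
    (F : MvPolynomial (Fin 2) K)
    (hF : Irreducible (MvPolynomial.map (algebraMap K (AlgebraicClosure K)) F))
    (n : ℕ) (hn : 0 < n)
    (Y : LaurentSeries (AlgebraicClosure K))
    (hnc : ¬ ∃ c : AlgebraicClosure K, Y = HahnSeries.C c)
    (hsol : MvPolynomial.aeval ![Y, bOf n Y] F = 0)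
    (G : MvPolynomial (Fin 2) (AlgebraicClosure K)) (hG0 : G ≠ 0)
    (hGroot : MvPolynomial.aeval
      ![(HahnSeries.single (n : ℤ) 1 : LaurentSeries (AlgebraicClosure K)), Y] G = 0)
    (hGmin : ∀ H : MvPolynomial (Fin 2) (AlgebraicClosure K), H ≠ 0 →
      MvPolynomial.aeval
        ![(HahnSeries.single (n : ℤ) 1 : LaurentSeries (AlgebraicClosure K)), Y] H = 0 →
      MvPolynomial.degreeOf 1 G ≤ MvPolynomial.degreeOf 1 H) :
    ∀ c : AlgebraicClosure K, ∀ m : ℕ, 0 < m →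
      ∀ Z : LaurentSeries (AlgebraicClosure K),
        MvPolynomial.aeval
          ![(HahnSeries.single (m : ℤ) 1 : LaurentSeries (AlgebraicClosure K)) +
              HahnSeries.C c, Z] G = 0 →
        MvPolynomial.aeval ![Z, bOf m Z] F = 0 :=
  roots_of_shifted_minimal_polynomial_are_solutions_general F n hn Y hsol G hG0 hGroot hGmin
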